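/- Fix β > 0, B > 0, N₀ > 0, L > 0, k > 0, c > 0, λ̄ ∈ ℝ, and set c₀ = β·N₀/(B·L). Define C, f : (0,∞) → ℝ by C(V) = β·((V·B/β)·exp(−c₀/V) − (N₀/L)·E₁(c₀/V)) + (k²/(4·c·β))·V² and f(V) = B·E₁(c₀/V) + (k²/(2·c·β))·V − λ̄. Suppose V_s > 0 satisfies f(V_s) = 0. Then (C(V) − C(V_s))/f(V) → V_s as V → V_s within (0,∞)\{V_s}. -/

import Mathlib

/-!
The function `y ↦ E₁(y)` has derivative `-e^{-y}/y`, so `V ↦ E₁(c₀/V)` has derivative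
`e^{-c₀/V}/V`. Since `β N₀ / L = B c₀`, this gives `C'(V) = V f'(V)` with
`f'(V) = B e^{-c₀/V}/V + k²/(2cβ) > 0`. As `f(Vs) = 0`, the quotient in question is the ratio of
the difference quotients of `C` and `f` at `Vs`, which tends to `C'(Vs)/f'(Vs) = Vs`.
-/

open MeasureTheory

noncomputable def E1 (y : ℝ) : ℝ := ∫ t in Set.Ioi y, Real.exp (-t) / t

lemma integrableOn_exp_neg_div {a : ℝ} (ha : 0 < a) :
    IntegrableOn (fun t : ℝ => Real.exp (-t) / t) (Set.Ioi a) := by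
  have h1 : IntegrableOn (fun t : ℝ => Real.exp (-t) / a) (Set.Ioi a) :=
    (integrableOn_exp_neg_Ioi a).div_const a
  refine Integrable.mono' h1
    (by fun_prop : Measurable fun t : ℝ => Real.exp (-t) / t).aestronglyMeasurable ?_
  refine (ae_restrict_iff' measurableSet_Ioi).2 (Filter.Eventually.of_forall fun t ht => ?_)
  have ht' : a < t := ht
  have : 0 < t := ha.trans ht'
  rw [Real.norm_of_nonneg (by positivity)]
  gcongr

lemma hasDerivAt_E1 {y : ℝ} (hy : 0 < y) : HasDerivAt E1 (-(Real.exp (-y) / y)) y := by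
  have hcont : ContinuousAt (fun t : ℝ => Real.exp (-t) / t) y :=
    (by fun_prop : ContinuousAt (fun t : ℝ => Real.exp (-t)) y).div continuousAt_id hy.ne'
  have hint : IntervalIntegrable (fun t : ℝ => Real.exp (-t) / t) volume (y / 2) y := by
    rw [intervalIntegrable_iff_integrableOn_Ioc_of_le (by linarith)]
    exact (integrableOn_exp_neg_div (half_pos hy)).mono_set Set.Ioc_subset_Ioi_self
  have hmeas : Measurable (fun t : ℝ => Real.exp (-t) / t) := by fun_prop
  have h := (intervalIntegral.integral_hasDerivAt_right hint
    hmeas.stronglyMeasurable.stronglyMeasurableAtFilter hcont).const_sub (E1 (y / 2))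
  refine h.congr_of_eventuallyEq ?_
  filter_upwards [lt_mem_nhds hy] with z hz
  have := intervalIntegral.integral_interval_add_Ioi'
    (f := fun t : ℝ => Real.exp (-t) / t) (μ := volume) (a := y / 2) (b := z)
    (by
      rw [intervalIntegrable_iff]
      refine (integrableOn_exp_neg_div (lt_min (half_pos hy) hz)).mono_set ?_
      exact Set.Ioc_subset_Ioi_self)
    (integrableOn_exp_neg_div hz)
  simp only [E1]
  linarith

lemma hasDerivAt_E1_div (c₀ : ℝ) (hc₀ : 0 < c₀) {V : ℝ} (hV : 0 < V) :
    HasDerivAt (fun V => E1 (c₀ / V)) (Real.exp (-(c₀ / V)) / V) V := by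
  have h := (hasDerivAt_E1 (div_pos hc₀ hV)).comp V
    ((hasDerivAt_const V c₀).div (hasDerivAt_id V) hV.ne')
  refine h.congr_deriv ?_
  field_simp
  ring

theorem stmt_13 (β B N₀ L k c lam : ℝ) (hβ : 0 < β) (hB : 0 < B) (hN : 0 < N₀) (hL : 0 < L)
    (hk : 0 < k) (hc : 0 < c)
    (c₀ : ℝ) (hc₀ : c₀ = β * N₀ / (B * L))
    (C f : ℝ → ℝ)
    (hC : ∀ V, C V = β * ((V * B / β) * Real.exp (-(c₀ / V)) - (N₀ / L) * E1 (c₀ / V))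
        + (k ^ 2 / (4 * c * β)) * V ^ 2)
    (hf : ∀ V, f V = B * E1 (c₀ / V) + (k ^ 2 / (2 * c * β)) * V - lam)
    (Vs : ℝ) (hVs : 0 < Vs) (hfVs : f Vs = 0) :
    Filter.Tendsto (fun V => (C V - C Vs) / f V)
      (nhdsWithin Vs (Set.Ioi 0 \ {Vs})) (nhds Vs) := by
  have hc₀pos : 0 < c₀ := by rw [hc₀]; positivity
  have hN' : N₀ / L = B * c₀ / β := by rw [hc₀]; field_simp
  have hE := hasDerivAt_E1_div c₀ hc₀pos hVs
  have hexp : HasDerivAt (fun V : ℝ => Real.exp (-(c₀ / V)))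
      (Real.exp (-(c₀ / Vs)) * (c₀ / Vs ^ 2)) Vs := by
    refine ((hasDerivAt_const Vs c₀).div (hasDerivAt_id Vs) hVs.ne').neg.exp.congr_deriv ?_
    simp only [id, Pi.neg_apply, Pi.div_apply]
    field_simp
    ring
  obtain ⟨D, hD⟩ : ∃ D, D = B * (Real.exp (-(c₀ / Vs)) / Vs) + k ^ 2 / (2 * c * β) := ⟨_, rfl⟩
  have hDpos : 0 < D := by rw [hD]; positivity
  have hfd : HasDerivAt f D Vs := by
    rw [funext hf]
    refine (((hE.const_mul B).add
      ((hasDerivAt_id Vs).const_mul (k ^ 2 / (2 * c * β)))).sub_const lam).congr_deriv ?_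
    rw [hD, mul_one]
  have hCd : HasDerivAt C (Vs * D) Vs := by
    rw [funext hC]
    refine ((((((hasDerivAt_id Vs).mul_const B).div_const β).mul hexp).sub
      (hE.const_mul (N₀ / L))).const_mul β |>.add
      ((hasDerivAt_pow 2 Vs).const_mul (k ^ 2 / (4 * c * β)))).congr_deriv ?_
    rw [hD, hN']
    simp only [id]
    field_simp
    ring
  have hlim := (hasDerivAt_iff_tendsto_slope.1 hCd).div (hasDerivAt_iff_tendsto_slope.1 hfd)
    hDpos.ne'
  rw [mul_div_cancel_right₀ _ hDpos.ne'] at hlim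
  have hmono : nhdsWithin Vs (Set.Ioi 0 \ {Vs}) ≤ nhdsWithin Vs {Vs}ᶜ :=
    nhdsWithin_mono _ fun x hx => hx.2
  refine (hlim.mono_left hmono).congr' ?_
  filter_upwards [self_mem_nhdsWithin] with V hV
  have hne : V - Vs ≠ 0 := sub_ne_zero.2 hV.2
  simp only [Pi.div_apply, slope_def_field, hfVs, sub_zero]
  exact div_div_div_cancel_right₀ hne _ _
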